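/- Let (X, ω) be a 2n-dimensional closed symplectic manifold. Then for every k ∈ {1, …, ⌊n/2⌋} one has H^{(k,0)}_ω(X;ℝ) ∩ H^{(0,2k)}_ω(X;ℝ) = {0}. -/

import Mathlib

open Submodule

noncomputable section

/-- An algebraic model of the de Rham complex of a closed (compact, without boundary)
smooth manifold `X` of dimension `2 * n` endowed with a symplectic structure `ω`
(a non-degenerate `d`-closed `2`-form): `M` is the space of (inhomogeneous) real smooth
differential forms, `Ω k` the subspace of `k`-forms, `d` the exterior differential,
`wedge` the wedge product, `ω` the symplectic form (so that `wedge ω` is the Lefschetz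
operator `L`), `Λ = -ι_{ω⁻¹}` the dual Lefschetz operator, and `integral` the integration
of top-degree forms over the closed manifold `X`. -/
structure ClosedSymplecticManifold (n : ℕ) where
  M : Type*
  [acg : AddCommGroup M]
  [mod : Module ℝ M]
  Ω : ℤ → Submodule ℝ M
  Ω_neg : ∀ k : ℤ, k < 0 → Ω k = ⊥
  Ω_top : ∀ k : ℤ, 2 * (n : ℤ) < k → Ω k = ⊥
  Ω_internal : DirectSum.IsInternal Ω
  d : M →ₗ[ℝ] M
  d_mem : ∀ (k : ℤ), ∀ α ∈ Ω k, d α ∈ Ω (k + 1)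
  d_d : ∀ α, d (d α) = 0
  wedge : M →ₗ[ℝ] M →ₗ[ℝ] M
  wedge_mem : ∀ (k l : ℤ), ∀ α ∈ Ω k, ∀ β ∈ Ω l, wedge α β ∈ Ω (k + l)
  wedge_assoc : ∀ α β γ, wedge (wedge α β) γ = wedge α (wedge β γ)
  one : M
  one_mem : one ∈ Ω 0
  one_wedge : ∀ α, wedge one α = α
  wedge_comm : ∀ (k l : ℤ), ∀ α ∈ Ω k, ∀ β ∈ Ω l,
      wedge α β = ((-1 : ℝ) ^ (k * l)) • wedge β α
  leibniz : ∀ (k : ℤ), ∀ α ∈ Ω k, ∀ β,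
      d (wedge α β) = wedge (d α) β + ((-1 : ℝ) ^ k) • wedge α (d β)
  ω : M
  ω_mem : ω ∈ Ω 2
  dω : d ω = 0
  /-- non-degeneracy of `ω`: `L^k : Ω^{n-k} → Ω^{n+k}` is injective … -/
  lefschetz_inj : ∀ k : ℕ, k ≤ n → ∀ α ∈ Ω ((n : ℤ) - k), (wedge ω ^ k) α = 0 → α = 0
  /-- … and surjective. -/
  lefschetz_surj : ∀ k : ℕ, k ≤ n → ∀ β ∈ Ω ((n : ℤ) + k),
      ∃ α ∈ Ω ((n : ℤ) - k), (wedge ω ^ k) α = β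
  Λ : M →ₗ[ℝ] M
  Λ_mem : ∀ (k : ℤ), ∀ α ∈ Ω k, Λ α ∈ Ω (k - 2)
  /-- the `𝔰𝔩(2;ℝ)`-commutation relation `[Λ, L] = (n - k)·id` on `k`-forms -/
  sl2 : ∀ (k : ℤ), ∀ α ∈ Ω k, Λ (wedge ω α) - wedge ω (Λ α) = ((n : ℤ) - k) • α
  /-- a `k`-form `β` is primitive iff `Λ β = 0` iff `L^{n-k+1} β = 0` -/
  primitive_iff : ∀ k : ℕ, k ≤ n → ∀ α ∈ Ω (k : ℤ),
      (Λ α = 0 ↔ (wedge ω ^ (n - k + 1)) α = 0)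
  integral : M →ₗ[ℝ] ℝ
  integral_ne_top : ∀ (k : ℤ), k ≠ 2 * (n : ℤ) → ∀ α ∈ Ω k, integral α = 0
  /-- Stokes' theorem on the closed manifold `X` -/
  stokes : ∀ α, integral (d α) = 0
  /-- positivity of the symplectic volume: for a function `f ≠ 0`, `∫_X f·f·ωⁿ > 0` -/
  volume_pos : ∀ f ∈ Ω 0, f ≠ 0 → 0 < integral (wedge f (wedge f ((wedge ω ^ n) one)))
  /-- Poincaré duality: non-degeneracy of the intersection pairing on cohomology -/
  poincare_duality : ∀ (k : ℤ), ∀ α ∈ Ω k, d α = 0 →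
      (∀ β ∈ Ω (2 * (n : ℤ) - k), d β = 0 → integral (wedge α β) = 0) →
      α ∈ (Ω (k - 1)).map d

attribute [instance] ClosedSymplecticManifold.acg ClosedSymplecticManifold.mod

namespace ClosedSymplecticManifold

variable {n : ℕ} (S : ClosedSymplecticManifold n)

/-- the Lefschetz operator `L = ω ∧ ·` -/
def L : S.M →ₗ[ℝ] S.M := S.wedge S.ω

/-- closed `k`-forms -/
def Zc (k : ℤ) : Submodule ℝ S.M := S.Ω k ⊓ LinearMap.ker S.d

/-- exact `k`-forms -/
def Bc (k : ℤ) : Submodule ℝ S.M := (S.Ω (k - 1)).map S.d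

/-- the de Rham cohomology group `H^k_{dR}(X; ℝ)` -/
abbrev Hc (k : ℤ) := ↥(S.Zc k) ⧸ (S.Bc k).comap (S.Zc k).subtype

/-- the de Rham cohomology class of a closed `k`-form -/
abbrev cls (k : ℤ) (a : S.Zc k) : S.Hc k := Submodule.Quotient.mk a

/-- the subgroup `H^{(r, k-2r)}_ω(X; ℝ) ⊆ H^k_{dR}(X;ℝ)` of classes admitting a representative
`L^r β` with `β` a primitive `(k - 2r)`-form -/
def Hsub (k : ℤ) (r : ℕ) : Submodule ℝ (S.Hc k) :=
  ((((S.Ω (k - 2 * r) ⊓ LinearMap.ker S.Λ).map (S.L ^ r)).comap (S.Zc k).subtype)).map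
    ((S.Bc k).comap (S.Zc k).subtype).mkQ

end ClosedSymplecticManifold

/-!
The map `L ^ (n - k) : H^{2k} → H^{2n}` separates `H^{(k, 0)}` from every `H^{(r, 2k - 2r)}` with
`r < k`. It kills the latter because `L ^ j` annihilates primitive `s`-forms as soon as `n < s + j`.
It is injective on the former: if `L ^ k f` is closed with `k < n`, then `d f = 0` by Lefschetz
injectivity on `1`-forms, and if moreover `L ^ n f = d η`, then
`∫ f ∧ f ∧ ω ^ n = ∫ d (f ∧ η) = 0`, so `f = 0` by positivity of the symplectic volume. For `n ≤ k`
the truncated exponent `n - k` is `0`, and the map is the identity.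
-/

namespace ClosedSymplecticManifold

variable {n : ℕ} {S : ClosedSymplecticManifold n}

theorem commute_d_L : Commute S.d S.L := by
  ext α
  simp [L, S.leibniz 2 S.ω S.ω_mem, S.dω]

theorem d_L_pow (j : ℕ) (α : S.M) : S.d ((S.L ^ j) α) = (S.L ^ j) (S.d α) :=
  LinearMap.congr_fun (commute_d_L.pow_right j).eq α

theorem commute_wedge_L {f : S.M} (hf : f ∈ S.Ω 0) : Commute (S.wedge f) S.L := by
  ext α
  simp [L, ← S.wedge_assoc, S.wedge_comm 0 2 f hf S.ω S.ω_mem]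

theorem wedge_one {k : ℤ} {α : S.M} (hα : α ∈ S.Ω k) : S.wedge α S.one = α := by
  simp [S.wedge_comm k 0 α hα S.one S.one_mem, S.one_wedge]

theorem wedge_L_pow_one {f : S.M} (hf : f ∈ S.Ω 0) (j : ℕ) :
    S.wedge f ((S.L ^ j) S.one) = (S.L ^ j) f := by
  have h := LinearMap.congr_fun ((commute_wedge_L hf).pow_right j).eq S.one
  simpa only [Module.End.mul_apply, wedge_one hf] using h

theorem L_mem {k : ℤ} {α : S.M} (hα : α ∈ S.Ω k) : S.L α ∈ S.Ω (k + 2) :=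
  add_comm 2 k ▸ S.wedge_mem 2 k S.ω S.ω_mem α hα

theorem L_pow_mem {k : ℤ} {α : S.M} (hα : α ∈ S.Ω k) (j : ℕ) : (S.L ^ j) α ∈ S.Ω (k + 2 * j) := by
  induction j with
  | zero => simpa using hα
  | succ j ih =>
    rw [pow_succ', Module.End.mul_apply]
    convert L_mem ih using 2
    push_cast
    ring

theorem Λ_L_pow_succ {s : ℤ} {β : S.M} (hβ : β ∈ S.Ω s) (hΛ : S.Λ β = 0) (j : ℕ) :
    S.Λ ((S.L ^ (j + 1)) β) = ((j + 1) * (n - s - j) : ℤ) • (S.L ^ j) β := by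
  have Λ_L (i : ℕ) : S.Λ ((S.L ^ (i + 1)) β) =
      S.L (S.Λ ((S.L ^ i) β)) + (n - (s + 2 * i) : ℤ) • (S.L ^ i) β := by
    rw [pow_succ', Module.End.mul_apply, ← S.sl2 _ _ (L_pow_mem hβ i)]
    exact (add_sub_cancel _ _).symm
  induction j with
  | zero => simpa [hΛ] using Λ_L 0
  | succ j ih =>
    rw [Λ_L, ih, map_zsmul, ← Module.End.mul_apply, ← pow_succ', ← add_smul]
    congr 1
    push_cast
    ring

theorem L_pow_eq_zero_of_primitive {s : ℤ} {β : S.M} (hβ : β ∈ S.Ω s) (hΛ : S.Λ β = 0)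
    {j : ℕ} (hj : n < s + j) : (S.L ^ j) β = 0 := by
  have vanishes_above : (S.L ^ (j + n)) β = 0 := by
    have hmem := L_pow_mem hβ (j + n)
    rwa [S.Ω_top _ (by push_cast; lia), Submodule.mem_bot] at hmem
  -- For `n < s + i`, `Λ (L ^ (i + 1) β)` is a nonzero multiple of `L ^ i β`.
  have descend (i : ℕ) (hi : j ≤ i) (h : (S.L ^ (i + 1)) β = 0) : (S.L ^ i) β = 0 := by
    have coeff_ne_zero : ((i + 1) * (n - s - i) : ℤ) ≠ 0 := mul_ne_zero (by lia) (by lia)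
    have hΛL := Λ_L_pow_succ hβ hΛ i
    rw [h, map_zero, ← Int.cast_smul_eq_zsmul ℝ] at hΛL
    exact (smul_eq_zero.mp hΛL.symm).resolve_left (Int.cast_ne_zero.mpr coeff_ne_zero)
  exact Nat.decreasingInduction' (P := fun i => (S.L ^ i) β = 0)
    (fun i _ hi => descend i hi) (Nat.le_add_right j n) vanishes_above

theorem d_eq_zero_of_L_pow_closed {f : S.M} (hf : f ∈ S.Ω 0) {k : ℕ} (hk : k < n)
    (hclosed : S.d ((S.L ^ k) f) = 0) : S.d f = 0 := by
  have hdf : S.d f ∈ S.Ω (n - (n - 1 : ℕ)) := by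
    convert S.d_mem 0 f hf using 2
    lia
  refine S.lefschetz_inj (n - 1) (Nat.sub_le n 1) _ hdf ?_
  change (S.L ^ (n - 1)) (S.d f) = 0
  rw [← Nat.sub_add_cancel (Nat.le_sub_one_of_lt hk), pow_add, Module.End.mul_apply, ← d_L_pow,
    hclosed, map_zero]

theorem eq_zero_of_L_pow_exact {f η : S.M} (hf : f ∈ S.Ω 0) (hdf : S.d f = 0)
    (hexact : S.d η = (S.L ^ n) f) : f = 0 := by
  by_contra hne
  refine (S.volume_pos f hf hne).ne' ?_
  calc S.integral (S.wedge f (S.wedge f ((S.L ^ n) S.one)))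
      = S.integral (S.wedge f (S.d η)) := by rw [wedge_L_pow_one hf, hexact]
    _ = S.integral (S.d (S.wedge f η)) := by simp [S.leibniz 0 f hf, hdf]
    _ = 0 := S.stokes _

theorem L_pow_mem_Zc {k : ℤ} (j : ℕ) {α : S.M} (hα : α ∈ S.Zc k) :
    (S.L ^ j) α ∈ S.Zc (k + 2 * j) :=
  ⟨L_pow_mem hα.1 j, (d_L_pow j α).trans <| by rw [LinearMap.mem_ker.mp hα.2, map_zero]⟩

theorem L_pow_mem_Bc {k : ℤ} (j : ℕ) {α : S.M} (hα : α ∈ S.Bc k) :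
    (S.L ^ j) α ∈ S.Bc (k + 2 * j) := by
  obtain ⟨η, hη, rfl⟩ := hα
  exact ⟨(S.L ^ j) η, add_sub_right_comm k (2 * j : ℤ) 1 ▸ L_pow_mem hη j, d_L_pow j η⟩

variable (S)

/-- The map `L ^ j : H^k_{dR}(X; ℝ) → H^{k + 2j}_{dR}(X; ℝ)` induced by the `j`-th power of the
Lefschetz operator on de Rham cohomology. -/
def cohomologyLPow (k : ℤ) (j : ℕ) : S.Hc k →ₗ[ℝ] S.Hc (k + 2 * j) :=
  Submodule.mapQ _ _ ((S.L ^ j).restrict fun _ => L_pow_mem_Zc j) fun _ => L_pow_mem_Bc j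

variable {S}

theorem cohomologyLPow_cls_eq_zero_iff {k : ℤ} {j : ℕ} {a : S.Zc k} :
    S.cohomologyLPow k j (S.cls k a) = 0 ↔ (S.L ^ j) a ∈ S.Bc (k + 2 * j) :=
  Submodule.Quotient.mk_eq_zero _

theorem Hsub_le_ker_cohomologyLPow {k : ℤ} {r j : ℕ} (h : n + r < k + j) :
    S.Hsub k r ≤ LinearMap.ker (S.cohomologyLPow k j) := by
  rintro _ ⟨a, ⟨β, ⟨hβ, hΛ⟩, hβa : (S.L ^ r) β = a⟩, rfl⟩
  refine cohomologyLPow_cls_eq_zero_iff.mpr ?_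
  rw [← hβa, ← Module.End.mul_apply, ← pow_add,
    L_pow_eq_zero_of_primitive hβ hΛ (by push_cast; lia)]
  exact zero_mem _

theorem disjoint_Hsub_ker_cohomologyLPow (k : ℕ) :
    Disjoint (S.Hsub (2 * k) k) (LinearMap.ker (S.cohomologyLPow (2 * k) (n - k))) := by
  rw [Submodule.disjoint_def]
  rintro _ ⟨a, ⟨f, ⟨hf, -⟩, hfa : (S.L ^ k) f = a⟩, rfl⟩ hker
  have hexact : (S.L ^ (n - k)) a ∈ S.Bc (2 * k + 2 * (n - k : ℕ)) :=
    cohomologyLPow_cls_eq_zero_iff.mp hker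
  refine (Submodule.Quotient.mk_eq_zero _).mpr (?_ : (a : S.M) ∈ S.Bc (2 * k))
  obtain hnk | hkn := le_or_gt n k
  · simpa [Nat.sub_eq_zero_of_le hnk] using hexact
  · rw [sub_self] at hf
    have hdf : S.d f = 0 := d_eq_zero_of_L_pow_closed hf hkn (hfa ▸ a.2.2)
    obtain ⟨η, -, hη⟩ := hexact
    rw [← hfa, ← Module.End.mul_apply, pow_sub_mul_pow _ hkn.le] at hη
    rw [← hfa, eq_zero_of_L_pow_exact hf hdf hη, map_zero]
    exact zero_mem _

end ClosedSymplecticManifold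

theorem inter_trivial_general {n : ℕ} (S : ClosedSymplecticManifold n) (k : ℕ) :
    Disjoint (S.Hsub (2 * k) k) (⨆ r < k, S.Hsub (2 * k) r) :=
  (ClosedSymplecticManifold.disjoint_Hsub_ker_cohomologyLPow k).mono_right <|
    iSup₂_le fun _ _ => ClosedSymplecticManifold.Hsub_le_ker_cohomologyLPow (by lia)

/-- **Remark.** Let `X` be a `2n`-dimensional closed manifold endowed with a symplectic
structure `ω`. Then, for every `k ∈ {1, …, ⌊n/2⌋}`, it holds
`H^{(k,0)}_ω(X;ℝ) ∩ H^{(0,2k)}_ω(X;ℝ) = {0}` (as subgroups of `H^{2k}_dR(X;ℝ)`). -/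
theorem inter_trivial {n : ℕ} (S : ClosedSymplecticManifold n) (k : ℕ)
    (hk1 : 1 ≤ k) (hk2 : k ≤ n / 2) :
    S.Hsub (2 * k) k ⊓ S.Hsub (2 * k) 0 = ⊥ := by
  exact ((inter_trivial_general S k).mono_right (le_iSup₂_of_le 0 hk1 le_rfl)).eq_bot

end
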